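/- (Polynomial growth of the local mass) Let n ≥ 1, s ∈ (0,1), q > 1, let K be an admissible kernel, and let u be a nonnegative weak supersolution of L_K u = u^q in ℝⁿ. Then there exists a constant C > 0, independent of R (but depending on u), such that S(R) = ∫_{B_R} u(x)^q dx ≤ C Rⁿ for all R ≥ 1. -/

import Mathlib

open MeasureTheory Metric

noncomputable section

abbrev Euc (n : ℕ) := EuclideanSpace ℝ (Fin n)

def IsAdmissibleKernel (n : ℕ) (s lam Lam : ℝ) (K : Euc n → ℝ) : Prop :=
  0 < lam ∧ lam ≤ Lam ∧ Measurable K ∧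
  (∀ z : Euc n, z ≠ 0 → K z = K (-z)) ∧
  (∀ z : Euc n, z ≠ 0 →
    lam * ‖z‖ ^ (-(n : ℝ) - 2 * s) ≤ K z ∧ K z ≤ Lam * ‖z‖ ^ (-(n : ℝ) - 2 * s))

def LK (n : ℕ) (K φ : Euc n → ℝ) (x : Euc n) : ℝ :=
  (1 / 2) * ∫ z : Euc n, (2 * φ x - φ (x + z) - φ (x - z)) * K z

def IsTestFun (n : ℕ) (φ : Euc n → ℝ) : Prop :=
  ContDiff ℝ (⊤ : ℕ∞) φ ∧ HasCompactSupport φ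

def MemL1Tail (n : ℕ) (s : ℝ) (u : Euc n → ℝ) : Prop :=
  LocallyIntegrable u volume ∧
  Integrable (fun x : Euc n => |u x| * (1 + ‖x‖) ^ (-(n : ℝ) - 2 * s)) volume

def MemLqLoc (n : ℕ) (q : ℝ) (u : Euc n → ℝ) : Prop :=
  ∀ R : ℝ, 0 < R → IntegrableOn (fun x : Euc n => u x ^ q) (ball (0 : Euc n) R) volume

def IsWeakSupersol (n : ℕ) (s q : ℝ) (K u : Euc n → ℝ) : Prop :=
  Measurable u ∧ (∀ x, 0 ≤ u x) ∧ MemLqLoc n q u ∧ MemL1Tail n s u ∧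
  ∀ φ : Euc n → ℝ, IsTestFun n φ → (∀ x, 0 ≤ φ x) →
    (∫ x : Euc n, u x ^ q * φ x) ≤ ∫ x : Euc n, u x * LK n K φ x

def IsCutoff (n : ℕ) (η : Euc n → ℝ) : Prop :=
  ContDiff ℝ (⊤ : ℕ∞) η ∧ (∀ x, 0 ≤ η x ∧ η x ≤ 1) ∧
  (∀ x : Euc n, ‖x‖ ≤ 1 → η x = 1) ∧ (∀ x : Euc n, 2 ≤ ‖x‖ → η x = 0)

def cutoffSq (n : ℕ) (η : Euc n → ℝ) (R : ℝ) : Euc n → ℝ :=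
  fun x => (η (R⁻¹ • x)) ^ 2

lemma aux_int (n : ℕ) (hn : 1 ≤ n) (s : ℝ) (hs : s ∈ Set.Ioo (0 : ℝ) 1) (M : ℝ) (hM : 0 ≤ M) :
    Integrable (fun z : Euc n => min 2 (M * ‖z‖ ^ 2) * ‖z‖ ^ (-(n : ℝ) - 2 * s)) volume := by
  obtain ⟨hs0, hs1⟩ := hs
  have : Nonempty (Fin n) := ⟨⟨0, hn⟩⟩
  have key := integrable_fun_norm_addHaar (volume : Measure (Euc n))
    (f := fun r : ℝ => min 2 (M * r ^ 2) * r ^ (-(n : ℝ) - 2 * s))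
  rw [key]
  have hmeas : Measurable (fun y : ℝ => y ^ (Module.finrank ℝ (Euc n) - 1) •
      (min 2 (M * y ^ 2) * y ^ (-(n : ℝ) - 2 * s))) := by
    simp only [smul_eq_mul]
    fun_prop
  have hfr : Module.finrank ℝ (Euc n) = n := by simp
  have heq : ∀ y : ℝ, 0 < y → y ^ (Module.finrank ℝ (Euc n) - 1) •
      (min 2 (M * y ^ 2) * y ^ (-(n : ℝ) - 2 * s)) = min 2 (M * y ^ 2) * y ^ (-1 - 2 * s) := by
    intro y hy
    rw [hfr, smul_eq_mul, ← Real.rpow_natCast y (n - 1), mul_left_comm, ← Real.rpow_add hy]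
    congr 2
    rw [Nat.cast_sub hn]; push_cast; ring
  rw [← Set.Ioc_union_Ioi_eq_Ioi (zero_le_one' ℝ)]
  refine IntegrableOn.union ?_ ?_
  · have h1 : IntegrableOn (fun y : ℝ => M * y ^ (1 - 2 * s)) (Set.Ioc 0 1) := by
      have := (intervalIntegral.intervalIntegrable_rpow' (a := 0) (b := 1)
        (r := 1 - 2 * s) (by linarith))
      rw [intervalIntegrable_iff_integrableOn_Ioc_of_le zero_le_one] at this
      exact this.const_mul M
    refine Integrable.mono' h1 hmeas.aestronglyMeasurable ?_
    refine (ae_restrict_iff' measurableSet_Ioc).2 (Filter.Eventually.of_forall ?_)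
    intro y hy
    have hy0 : 0 < y := hy.1
    rw [heq y hy0, Real.norm_of_nonneg (by positivity)]
    have : M * y ^ (1 - 2 * s) = (M * y ^ 2) * y ^ (-1 - 2 * s) := by
      rw [mul_assoc, ← Real.rpow_natCast y 2, ← Real.rpow_add hy0]
      congr 2; push_cast; ring
    rw [this]
    exact mul_le_mul_of_nonneg_right (min_le_right _ _) (by positivity)
  · have h1 : IntegrableOn (fun y : ℝ => 2 * y ^ (-1 - 2 * s)) (Set.Ioi 1) :=
      (integrableOn_Ioi_rpow_of_lt (by linarith) zero_lt_one).const_mul 2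
    refine Integrable.mono' h1 hmeas.aestronglyMeasurable ?_
    refine (ae_restrict_iff' measurableSet_Ioi).2 (Filter.Eventually.of_forall ?_)
    intro y hy
    have hy0 : 0 < y := lt_trans zero_lt_one hy
    rw [heq y hy0, Real.norm_of_nonneg (by positivity)]
    exact mul_le_mul_of_nonneg_right (min_le_left _ _) (by positivity)

lemma aux_diff (n : ℕ) (φ : Euc n → ℝ) (h : ContDiff ℝ (⊤ : ℕ∞) φ) (hc : HasCompactSupport φ) :
    ∃ M : ℝ, 0 ≤ M ∧ ∀ x z : Euc n, 2 * φ x - φ (x + z) - φ (x - z) ≤ M * ‖z‖ ^ 2 := by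
  have h1 : ContDiff ℝ 1 (fderiv ℝ φ) :=
    h.fderiv_right (m := 1) (WithTop.coe_le_coe.2 (le_top : (1 + 1 : ℕ∞) ≤ ⊤))
  obtain ⟨L, hL⟩ := h1.lipschitzWith_of_hasCompactSupport (hc.fderiv ℝ) one_ne_zero
  refine ⟨2 * L, by positivity, fun x z => ?_⟩
  have hd : Differentiable ℝ φ := h.differentiable (by simp)
  have hder : ∀ w ∈ closedBall (0 : Euc n) ‖z‖,
      HasFDerivWithinAt (fun w => φ (x + w) + φ (x - w))
        (fderiv ℝ φ (x + w) - fderiv ℝ φ (x - w)) (closedBall (0 : Euc n) ‖z‖) w := by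
    intro w _
    apply HasFDerivAt.hasFDerivWithinAt
    have e1 : HasFDerivAt (fun w => φ (x + w)) (fderiv ℝ φ (x + w)) w := by
      have := (hd (x + w)).hasFDerivAt.comp w ((hasFDerivAt_id w).const_add x)
      simpa [Function.comp_def] using this
    have e2 : HasFDerivAt (fun w => φ (x - w)) (-fderiv ℝ φ (x - w)) w := by
      have := (hd (x - w)).hasFDerivAt.comp w ((hasFDerivAt_id w).const_sub x)
      simpa [Function.comp_def] using this
    have e3 := e1.add e2
    rw [← sub_eq_add_neg] at e3
    exact e3
  have hb : ∀ w ∈ closedBall (0 : Euc n) ‖z‖,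
      ‖fderiv ℝ φ (x + w) - fderiv ℝ φ (x - w)‖ ≤ 2 * L * ‖z‖ := by
    intro w hw
    have hw' : ‖w‖ ≤ ‖z‖ := by simpa using hw
    have := hL.dist_le_mul (x + w) (x - w)
    rw [dist_eq_norm, dist_eq_norm] at this
    have e : x + w - (x - w) = w + w := by abel
    rw [e] at this
    have e3 := norm_add_le w w
    calc _ ≤ (L : ℝ) * ‖w + w‖ := this
      _ ≤ L * (2 * ‖z‖) := by gcongr; linarith
      _ = _ := by ring
  have := (convex_closedBall (0 : Euc n) ‖z‖).norm_image_sub_le_of_norm_hasFDerivWithin_le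
    hder hb (x := 0) (y := z) (by simp) (by simp)
  simp only [add_zero, sub_zero, Real.norm_eq_abs] at this
  have := neg_abs_le (φ (x + z) + φ (x - z) - (φ x + φ x))
  nlinarith

lemma aux_LK (n : ℕ) (hn : 1 ≤ n) (s : ℝ) (hs : s ∈ Set.Ioo (0 : ℝ) 1)
    (lam Lam : ℝ) (K : Euc n → ℝ) (hK : IsAdmissibleKernel n s lam Lam K)
    (φ : Euc n → ℝ) (h0 : ∀ x, 0 ≤ φ x) (h1 : ∀ x, φ x ≤ 1) (M : ℝ) (hM : 0 ≤ M)
    (hφ : ∀ x z : Euc n, 2 * φ x - φ (x + z) - φ (x - z) ≤ M * ‖z‖ ^ 2)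
    (R : ℝ) (hR : 1 ≤ R) (x : Euc n) :
    LK n K (fun x => φ (R⁻¹ • x)) x ≤ (1 / 2) * (Lam * R ^ (-(2 * s)) *
      ∫ z : Euc n, min 2 (M * ‖z‖ ^ 2) * ‖z‖ ^ (-(n : ℝ) - 2 * s)) := by
  obtain ⟨hl, hlL, -, -, hKb⟩ := hK
  have : Nonempty (Fin n) := ⟨⟨0, hn⟩⟩
  have hR0 : 0 < R := by linarith
  have hLam : 0 < Lam := by linarith
  unfold LK
  refine mul_le_mul_of_nonneg_left ?_ (by norm_num)
  set G : Euc n → ℝ := fun z => min 2 (M * ‖z‖ ^ 2) * ‖z‖ ^ (-(n : ℝ) - 2 * s) with hG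
  have hGi : Integrable G volume := aux_int n hn s hs M hM
  have hG0 : ∀ z, 0 ≤ G z := fun z => by simp only [hG]; positivity
  have hcomp : ∫ z, G (R⁻¹ • z) = R ^ n * ∫ z, G z := by
    rw [Measure.integral_comp_inv_smul_of_nonneg _ _ hR0.le]
    simp
  have hGi' : Integrable (fun z => Lam * R ^ (-(n:ℝ) - 2 * s) * G (R⁻¹ • z)) volume :=
    (hGi.comp_smul (inv_ne_zero hR0.ne')).const_mul _
  have hrhs : Lam * R ^ (-(2 * s)) * ∫ z, G z
      = ∫ z, Lam * R ^ (-(n:ℝ) - 2 * s) * G (R⁻¹ • z) := by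
    rw [integral_const_mul, hcomp, ← Real.rpow_natCast R n]
    have : R ^ (-(2 * s)) = R ^ (-(n:ℝ) - 2 * s) * R ^ (n : ℝ) := by
      rw [← Real.rpow_add hR0]; congr 1; ring
    rw [this]; ring
  rw [hrhs]
  have hbd : ∀ z : Euc n, z ≠ 0 →
      (2 * φ (R⁻¹ • x) - φ (R⁻¹ • (x + z)) - φ (R⁻¹ • (x - z))) * K z
        ≤ Lam * R ^ (-(n:ℝ) - 2 * s) * G (R⁻¹ • z) := by
    intro z hz
    have hz0 : 0 < ‖z‖ := norm_pos_iff.2 hz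
    have hK0 : 0 ≤ K z := le_trans (by positivity) (hKb z hz).1
    have hm : 2 * φ (R⁻¹ • x) - φ (R⁻¹ • (x + z)) - φ (R⁻¹ • (x - z))
        ≤ min 2 (M * ‖R⁻¹ • z‖ ^ 2) := by
      refine le_min ?_ ?_
      · linarith [h1 (R⁻¹ • x), h0 (R⁻¹ • (x + z)), h0 (R⁻¹ • (x - z))]
      · rw [smul_add, smul_sub]; exact hφ _ _
    have hn' : ‖z‖ ^ (-(n:ℝ) - 2 * s) =
        R ^ (-(n:ℝ) - 2 * s) * ‖R⁻¹ • z‖ ^ (-(n:ℝ) - 2 * s) := by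
      rw [← Real.mul_rpow hR0.le (norm_nonneg _), norm_smul, Real.norm_of_nonneg (by positivity),
        mul_inv_cancel_left₀ hR0.ne']
    calc _ ≤ min 2 (M * ‖R⁻¹ • z‖ ^ 2) * K z := mul_le_mul_of_nonneg_right hm hK0
      _ ≤ min 2 (M * ‖R⁻¹ • z‖ ^ 2) * (Lam * ‖z‖ ^ (-(n:ℝ) - 2 * s)) :=
        mul_le_mul_of_nonneg_left (hKb z hz).2 (by positivity)
      _ = _ := by rw [hn']; simp only [hG]; ring
  by_cases hi : Integrable (fun z : Euc n =>
      (2 * φ (R⁻¹ • x) - φ (R⁻¹ • (x + z)) - φ (R⁻¹ • (x - z))) * K z) volume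
  · refine integral_mono_ae hi hGi' ?_
    filter_upwards [Measure.ae_ne volume (0 : Euc n)] with z hz using hbd z hz
  · rw [integral_undef hi]
    exact integral_nonneg fun z => mul_nonneg (by positivity) (hG0 _)

lemma aux_LK0 (n : ℕ) (hn : 1 ≤ n) (s : ℝ)
    (lam Lam : ℝ) (K : Euc n → ℝ) (hK : IsAdmissibleKernel n s lam Lam K)
    (φ : Euc n → ℝ) (h0 : ∀ x, 0 ≤ φ x) (x : Euc n) (hx : φ x = 0) :
    LK n K φ x ≤ 0 := by
  obtain ⟨hl, hlL, -, -, hKb⟩ := hK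
  have : Nonempty (Fin n) := ⟨⟨0, hn⟩⟩
  unfold LK
  refine mul_nonpos_of_nonneg_of_nonpos (by norm_num) (integral_nonpos_of_ae ?_)
  filter_upwards [Measure.ae_ne volume (0 : Euc n)] with z hz
  have hK0 : 0 ≤ K z := le_trans (by positivity) (hKb z hz).1
  exact mul_nonpos_of_nonpos_of_nonneg (by linarith [h0 (x + z), h0 (x - z)]) hK0

/-- Polynomial growth of the local mass, Lemma 3.1:
`S(R) = ∫_{B_R} u^q ≤ C R^n` for all `R ≥ 1`. -/
theorem local_mass_polynomial_growth
    (n : ℕ) (hn : 1 ≤ n) (s : ℝ) (hs : s ∈ Set.Ioo (0 : ℝ) 1)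
    (q : ℝ) (hq : 1 < q)
    (lam Lam : ℝ) (K : Euc n → ℝ) (hK : IsAdmissibleKernel n s lam Lam K)
    (u : Euc n → ℝ) (hu : IsWeakSupersol n s q K u) :
    ∃ C : ℝ, 0 < C ∧ ∀ R : ℝ, 1 ≤ R →
      (∫ x in ball (0 : Euc n) R, u x ^ q) ≤ C * R ^ (n : ℝ) := by
  obtain ⟨hum, hu0, huq, ⟨-, hut⟩, hsup⟩ := hu
  let f : ContDiffBump (0 : Euc n) := ⟨1, 2, one_pos, one_lt_two⟩
  obtain ⟨M, hM, hMf⟩ := aux_diff n f f.contDiff f.hasCompactSupport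
  have hf0 : ∀ x, 0 ≤ f x := fun x => f.nonneg
  have hf1 : ∀ x, f x ≤ 1 := fun x => f.le_one
  have hLK := aux_LK n hn s hs lam Lam K hK f hf0 hf1 M hM hMf
  set I : ℝ := ∫ z : Euc n, min 2 (M * ‖z‖ ^ 2) * ‖z‖ ^ (-(n : ℝ) - 2 * s) with hI
  have hI0 : 0 ≤ I := integral_nonneg fun z => by positivity
  set A : ℝ := ∫ x : Euc n, |u x| * (1 + ‖x‖) ^ (-(n : ℝ) - 2 * s) with hA
  have hA0 : 0 ≤ A := integral_nonneg fun z => by positivity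
  have hLam : 0 < Lam := lt_of_lt_of_le hK.1 hK.2.1
  set D : ℝ := (1 / 2) * Lam * I * 3 ^ ((n : ℝ) + 2 * s) with hD
  have hD0 : 0 ≤ D := by positivity
  refine ⟨D * A + 1, by positivity, fun R hR => ?_⟩
  have hR0 : 0 < R := by linarith
  set φ : Euc n → ℝ := fun x => f (R⁻¹ • x) with hφ
  have hnorm : ∀ x : Euc n, ‖R⁻¹ • x‖ = R⁻¹ * ‖x‖ := fun x => by
    rw [norm_smul, Real.norm_of_nonneg (by positivity)]
  have hφout : ∀ x : Euc n, 2 * R ≤ ‖x‖ → φ x = 0 := by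
    intro x hx
    apply f.zero_of_le_dist
    rw [dist_zero_right, hnorm, inv_mul_eq_div, le_div_iff₀ hR0]
    exact hx
  have hφin : ∀ x : Euc n, ‖x‖ ≤ R → φ x = 1 := by
    intro x hx
    apply f.one_of_mem_closedBall
    rw [mem_closedBall, dist_zero_right, hnorm, inv_mul_eq_div, div_le_iff₀ hR0]
    change ‖x‖ ≤ 1 * R
    linarith
  have hφs : ContDiff ℝ (⊤ : ℕ∞) φ := f.contDiff.comp (contDiff_const_smul _)
  have hφc : HasCompactSupport φ := by
    refine HasCompactSupport.intro (isCompact_closedBall (0 : Euc n) (2 * R)) fun x hx => ?_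
    apply hφout
    simp only [mem_closedBall, dist_zero_right, not_le] at hx
    exact hx.le
  have hφ0 : ∀ x, 0 ≤ φ x := fun x => hf0 _
  have hφ1 : ∀ x, φ x ≤ 1 := fun x => hf1 _
  have hmain := hsup φ ⟨hφs, hφc⟩ hφ0
  have hquq : Measurable (fun x => u x ^ q) := hum.pow_const q
  -- left-hand side
  have hleft : (∫ x in ball (0 : Euc n) R, u x ^ q) ≤ ∫ x, u x ^ q * φ x := by
    have hint : Integrable (fun x => u x ^ q * φ x) volume := by
      have h2 := (huq (2 * R) (by linarith)).integrable_indicator measurableSet_ball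
      refine h2.mono' (hquq.mul hφs.continuous.measurable).aestronglyMeasurable
        (Filter.Eventually.of_forall fun x => ?_)
      have hup : 0 ≤ u x ^ q := Real.rpow_nonneg (hu0 x) q
      rw [Real.norm_of_nonneg (mul_nonneg hup (hφ0 x))]
      by_cases hx : x ∈ ball (0 : Euc n) (2 * R)
      · rw [Set.indicator_of_mem hx]
        exact mul_le_of_le_one_right hup (hφ1 x)
      · rw [Set.indicator_of_notMem hx, hφout x (by simpa using hx), mul_zero]
    rw [← integral_indicator measurableSet_ball]
    refine integral_mono ((huq R hR0).integrable_indicator measurableSet_ball) hint fun x => ?_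
    have hup : 0 ≤ u x ^ q := Real.rpow_nonneg (hu0 x) q
    by_cases hx : x ∈ ball (0 : Euc n) R
    · simp only [Set.indicator_of_mem hx]
      rw [hφin x (by simpa using (mem_ball.1 hx).le), mul_one]
    · simp only [Set.indicator_of_notMem hx]
      exact mul_nonneg hup (hφ0 x)
  -- right-hand side
  have hDR : 0 ≤ D * R ^ (n : ℝ) := mul_nonneg hD0 (Real.rpow_nonneg hR0.le _)
  have hpt : ∀ x, LK n K φ x ≤ D * R ^ (n : ℝ) * (1 + ‖x‖) ^ (-(n : ℝ) - 2 * s) := by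
    intro x
    rcases le_or_gt (2 * R) ‖x‖ with hx | hx
    · exact (aux_LK0 n hn s lam Lam K hK φ hφ0 x (hφout x hx)).trans
        (mul_nonneg hDR (Real.rpow_nonneg (by linarith [norm_nonneg x]) _))
    · refine (hLK R hR x).trans ?_
      have h3 : (3 * R) ^ (-(n : ℝ) - 2 * s) ≤ (1 + ‖x‖) ^ (-(n : ℝ) - 2 * s) :=
        Real.rpow_le_rpow_of_nonpos (by linarith [norm_nonneg x]) (by linarith) (by
          have := hs.1
          have : (0 : ℝ) ≤ n := by positivity
          linarith)
      refine le_trans (le_of_eq ?_) (mul_le_mul_of_nonneg_left h3 hDR)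
      have e1 : R ^ (-(2 * s)) = R ^ (n : ℝ) * R ^ (-(n : ℝ) - 2 * s) := by
        rw [← Real.rpow_add hR0]; congr 1; ring
      have e2 : (3 : ℝ) ^ ((n : ℝ) + 2 * s) * 3 ^ (-(n : ℝ) - 2 * s) = 1 := by
        rw [← Real.rpow_add three_pos, ← Real.rpow_zero 3]; congr 1; ring
      rw [Real.mul_rpow (by norm_num) hR0.le, e1, hD]
      linear_combination (-(1 / 2) * Lam * I * R ^ (n : ℝ) * R ^ (-(n : ℝ) - 2 * s)) * e2
  have hright : (∫ x, u x * LK n K φ x) ≤ D * A * R ^ (n : ℝ) := by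
    have e : D * A * R ^ (n : ℝ) = ∫ x : Euc n, (D * R ^ (n : ℝ)) *
        (|u x| * (1 + ‖x‖) ^ (-(n : ℝ) - 2 * s)) := by
      rw [integral_const_mul]; ring
    by_cases hi : Integrable (fun x => u x * LK n K φ x) volume
    · rw [e]
      refine integral_mono hi (hut.const_mul _) fun x => ?_
      simp only
      rw [abs_of_nonneg (hu0 x)]
      calc _ ≤ u x * (D * R ^ (n : ℝ) * (1 + ‖x‖) ^ (-(n : ℝ) - 2 * s)) :=
            mul_le_mul_of_nonneg_left (hpt x) (hu0 x)
        _ = _ := by ring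
    · rw [integral_undef hi]; positivity
  have : 0 ≤ R ^ (n : ℝ) := by positivity
  linarith
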